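/- Let M be a symmetral mould and M^{×(−1)} its multiplicative inverse (which exists since M^∅ = 1). Let D be a mould derivation of one of the following three kinds: (i) D is induced by a ℂ-linear derivation d of A, (D M)^ω = d(M^ω); (ii) D = D_φ for a function φ : Ω → A, (D_φ M)^∅ = 0 and (D_φ M)^{ω₁,…,ω_r} = (φ(ω₁)+…+φ(ω_r)) M^{ω₁,…,ω_r}; (iii) Ω is a commutative semigroup and D = ∇_J with J an alternal mould, (∇_J M)^ω = Σ_{ω = α·β·γ, β ≠ ∅} J^β M^{α·(‖β‖)·γ}, where (‖β‖) is the one-letter word formed by the sum of the letters of β. Then (D M) × M^{×(−1)} and M^{×(−1)} × (D M) are alternal moulds. -/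

import Mathlib

/-! Statement 12: for a symmetral mould M with multiplicative inverse N, and D a mould derivation of one of the three indicated kinds, (D M) × N and N × (D M) are alternal. -/

open scoped Classical

/-- Shuffle coefficient `sh(α, β; ω)`: the number of ways of obtaining `ω` by
interdigitating the letters of `α` and those of `β` while preserving their internal order. -/
noncomputable def sh {Ω : Type*} : List Ω → List Ω → List Ω → ℕ
  | [], [], [] => 1
  | _ :: _, _, [] => 0
  | [], _ :: _, [] => 0
  | [], [], _ :: _ => 0
  | [], b :: β, c :: ω => if b = c then sh [] β ω else 0
  | a :: α, [], c :: ω => if a = c then sh α [] ω else 0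
  | a :: α, b :: β, c :: ω =>
      (if a = c then sh α (b :: β) ω else 0) +
      (if b = c then sh (a :: α) β ω else 0)

/-- Mould multiplication `(M × N)^ω = Σ_{ω = ω¹·ω²} M^{ω¹} N^{ω²}`. -/
noncomputable def mmul {Ω A : Type*} [CommRing A] (M N : List Ω → A) : List Ω → A := fun ω =>
  ∑ i ∈ Finset.range (ω.length + 1), M (ω.take i) * N (ω.drop i)

/-- The unit mould `1^•`. -/
def munit {Ω A : Type*} [CommRing A] : List Ω → A := fun ω => match ω with | [] => 1 | _ => 0

/-- `Σ_ω sh(α,β;ω) M^ω`, realized as a finite sum over the permutations of `α ++ β`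
(the shuffle coefficient vanishes on any word which is not a permutation of `α ++ β`). -/
noncomputable def shSum {Ω A : Type*} [CommRing A] (M : List Ω → A) (α β : List Ω) : A :=
  ∑ ω ∈ (α ++ β).permutations.toFinset, sh α β ω • M ω

/-- A mould is alternal if `M^∅ = 0` and all the shuffle sums vanish. -/
def IsAlternal {Ω A : Type*} [CommRing A] (M : List Ω → A) : Prop :=
  M [] = 0 ∧ ∀ α β : List Ω, α ≠ [] → β ≠ [] → shSum M α β = 0

/-- A mould is symmetral if `M^∅ = 1` and the shuffle sums reproduce the products. -/
def IsSymmetral {Ω A : Type*} [CommRing A] (M : List Ω → A) : Prop :=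
  M [] = 1 ∧ ∀ α β : List Ω, α ≠ [] → β ≠ [] → shSum M α β = M α * M β

/-- The sum `‖ω‖` of a non-empty word, in the commutative semigroup `Ω`
(junk value on the empty word). -/
noncomputable def wsum {Ω : Type*} [AddCommSemigroup Ω] [Nonempty Ω] : List Ω → Ω
  | [] => Classical.arbitrary Ω
  | a :: l => l.foldl (· + ·) a

/-- The mould derivation `D_φ`: `(D_φ M)^{ω₁,…,ω_r} = (φ(ω₁)+…+φ(ω_r)) M^ω`. -/
def Dphi {Ω A : Type*} [CommRing A] (φ : Ω → A) (M : List Ω → A) : List Ω → A := fun ω =>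
  (ω.map φ).sum * M ω

/-- The mould derivation `∇_J`:
`(∇_J M)^ω = Σ_{ω = α·β·γ, β ≠ ∅} J^β M^{α·(‖β‖)·γ}`. -/
noncomputable def nablaJ {Ω A : Type*} [AddCommSemigroup Ω] [Nonempty Ω] [CommRing A]
    (J M : List Ω → A) : List Ω → A := fun ω =>
  ∑ i ∈ Finset.range (ω.length + 1), ∑ j ∈ Finset.Ico (i + 1) (ω.length + 1),
    J ((ω.drop i).take (j - i)) *
      M (ω.take i ++ wsum ((ω.drop i).take (j - i)) :: ω.drop j)

section ShuffleSums

variable {Ω A : Type*}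

/-- The sum of `F u v` over the decompositions `w = u ++ v`. -/
def splitSum [AddCommMonoid A] : (List Ω → List Ω → A) → List Ω → A
  | F, [] => F [] []
  | F, c :: w => F [] (c :: w) + splitSum (fun u v => F (c :: u) v) w

/-- The list, with multiplicities, of the shuffles of two words. -/
def shuffles : List Ω → List Ω → List (List Ω)
  | [], β => [β]
  | a :: α, [] => [a :: α]
  | a :: α, b :: β =>
      (shuffles α (b :: β)).map (a :: ·) ++ (shuffles (a :: α) β).map (b :: ·)
  termination_by α β => α.length + β.length

/-- The sum of the values of `M` over the shuffles of two words. -/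
def shuffleSum [AddCommMonoid A] (M : List Ω → A) (α β : List Ω) : A :=
  ((shuffles α β).map M).sum

/-- The product of dimoulds, that is, of functions of two words. -/
def dimul [NonUnitalNonAssocSemiring A] (P Q : List Ω → List Ω → A) (α β : List Ω) : A :=
  splitSum (fun α₁ α₂ => splitSum (fun β₁ β₂ => P α₁ β₁ * Q α₂ β₂) β) α

/-! ### Sums over decompositions -/

section SplitSum

variable [AddCommMonoid A]

@[simp] lemma splitSum_nil (F : List Ω → List Ω → A) : splitSum F [] = F [] [] := rfl

@[simp] lemma splitSum_cons (F : List Ω → List Ω → A) (c : Ω) (w : List Ω) :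
    splitSum F (c :: w) = F [] (c :: w) + splitSum (fun u v => F (c :: u) v) w := rfl

lemma splitSum_add (F G : List Ω → List Ω → A) (w : List Ω) :
    splitSum (fun u v => F u v + G u v) w = splitSum F w + splitSum G w := by
  induction w generalizing F G with
  | nil => rfl
  | cons c w ih => simp only [splitSum_cons, ih]; abel

lemma splitSum_zero (w : List Ω) : splitSum (fun _ _ => (0 : A)) w = 0 := by
  induction w with
  | nil => rfl
  | cons c w ih => simp [ih]

lemma splitSum_eq_sum_range (F : List Ω → List Ω → A) (w : List Ω) :
    splitSum F w = ∑ i ∈ Finset.range (w.length + 1), F (w.take i) (w.drop i) := by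
  induction w generalizing F with
  | nil => simp
  | cons c w ih =>
    rw [splitSum_cons, ih, List.length_cons, Finset.sum_range_succ' _ (w.length + 1)]
    simp [add_comm]

lemma splitSum_assoc (F : List Ω → List Ω → List Ω → A) (w : List Ω) :
    splitSum (fun u v => splitSum (fun x y => F x y v) u) w =
      splitSum (fun u v => splitSum (fun x y => F u x y) v) w := by
  induction w generalizing F with
  | nil => rfl
  | cons c w ih =>
    simp only [splitSum_cons, splitSum_nil, splitSum_add]
    rw [ih (fun x y v => F (c :: x) y v)]
    abel

lemma splitSum_comm (F : List Ω → List Ω → List Ω → List Ω → A) (α β : List Ω) :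
    splitSum (fun u v => splitSum (fun x y => F u v x y) β) α =
      splitSum (fun x y => splitSum (fun u v => F u v x y) α) β := by
  induction α generalizing F with
  | nil => rfl
  | cons c w ih => simp only [splitSum_cons, splitSum_add, ih]

end SplitSum

lemma splitSum_mul_left [NonUnitalNonAssocSemiring A] (a : A) (F : List Ω → List Ω → A)
    (w : List Ω) : splitSum (fun u v => a * F u v) w = a * splitSum F w := by
  induction w generalizing F with
  | nil => rfl
  | cons c w ih => simp only [splitSum_cons, ih, mul_add]

lemma splitSum_mul_right [NonUnitalNonAssocSemiring A] (a : A) (F : List Ω → List Ω → A)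
    (w : List Ω) : splitSum (fun u v => F u v * a) w = splitSum F w * a := by
  induction w generalizing F with
  | nil => rfl
  | cons c w ih => simp only [splitSum_cons, ih, add_mul]

/-! ### Sums over shuffles -/

section ShuffleSum

@[simp] lemma shuffles_nil_left (β : List Ω) : shuffles [] β = [β] := by rw [shuffles]

@[simp] lemma shuffles_nil_right (α : List Ω) : shuffles α [] = [α] := by
  cases α <;> rw [shuffles]

lemma perm_of_mem_shuffles (α β w : List Ω) (hw : w ∈ shuffles α β) : w.Perm (α ++ β) := by
  induction α, β using shuffles.induct generalizing w with
  | case1 β => simp_all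
  | case2 a α => simp_all
  | case3 a α b β ih₁ ih₂ =>
    rw [shuffles, List.mem_append, List.mem_map, List.mem_map] at hw
    rcases hw with ⟨u, hu, rfl⟩ | ⟨u, hu, rfl⟩
    · exact (ih₁ u hu).cons a
    · exact ((ih₂ u hu).cons b).trans List.perm_middle.symm

lemma sh_nil_left (β w : List Ω) : sh [] β w = if β = w then 1 else 0 := by
  induction β generalizing w with
  | nil => cases w <;> simp [sh]
  | cons b β ih => cases w <;> simp [sh, ih, ite_and]

lemma sh_nil_right (α w : List Ω) : sh α [] w = if α = w then 1 else 0 := by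
  induction α generalizing w with
  | nil => cases w <;> simp [sh]
  | cons b β ih => cases w <;> simp [sh, ih, ite_and]

lemma count_cons_map_cons (a c : Ω) (w : List Ω) (l : List (List Ω)) :
    (l.map (a :: ·)).count (c :: w) = if a = c then l.count w else 0 := by
  split_ifs with h
  · subst h
    exact List.count_map_of_injective l _ List.cons_injective w
  · rw [List.count_eq_zero]
    simp [h]

lemma sh_eq_count (α β w : List Ω) : sh α β w = (shuffles α β).count w := by
  induction α, β using shuffles.induct generalizing w with
  | case1 β => simp [sh_nil_left, List.count_singleton]
  | case2 a α => simp [sh_nil_right, List.count_singleton]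
  | case3 a α b β ih₁ ih₂ =>
    rw [shuffles, List.count_append]
    cases w with
    | nil =>
      rw [sh, List.count_eq_zero.2 (by simp), List.count_eq_zero.2 (by simp)]
    | cons c w => rw [sh, count_cons_map_cons, count_cons_map_cons, ih₁, ih₂]

lemma shSum_eq_shuffleSum [CommRing A] (M : List Ω → A) (α β : List Ω) :
    shSum M α β = shuffleSum M α β := by
  have h : shuffleSum M α β = ∑ w ∈ (shuffles α β).toFinset, sh α β w • M w := by
    rw [shuffleSum, Finset.sum_list_map_count]
    refine Finset.sum_congr rfl fun w _ => ?_
    rw [sh_eq_count]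
    congr!
  rw [h, shSum]
  symm
  apply Finset.sum_subset
  · intro w hw
    simpa using perm_of_mem_shuffles α β w (by simpa using hw)
  · intro w _ hw
    rw [sh_eq_count, List.count_eq_zero.2 (by simpa using hw), zero_smul]

section AddCommMonoid

variable [AddCommMonoid A]

@[simp] lemma shuffleSum_nil_left (M : List Ω → A) (β : List Ω) :
    shuffleSum M [] β = M β := by simp [shuffleSum]

@[simp] lemma shuffleSum_nil_right (M : List Ω → A) (α : List Ω) :
    shuffleSum M α [] = M α := by simp [shuffleSum]

lemma shuffleSum_cons_cons (M : List Ω → A) (a b : Ω) (α β : List Ω) :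
    shuffleSum M (a :: α) (b :: β) =
      shuffleSum (fun w => M (a :: w)) α (b :: β) +
        shuffleSum (fun w => M (b :: w)) (a :: α) β := by
  simp [shuffleSum, shuffles, Function.comp_def]

lemma shuffleSum_add (M N : List Ω → A) (α β : List Ω) :
    shuffleSum (fun w => M w + N w) α β = shuffleSum M α β + shuffleSum N α β :=
  List.sum_map_add

lemma shuffleSum_congr {M N : List Ω → A} {α β : List Ω}
    (h : ∀ w, w.Perm (α ++ β) → M w = N w) : shuffleSum M α β = shuffleSum N α β := by
  unfold shuffleSum
  congr 1
  exact List.map_congr_left fun w hw => h w (perm_of_mem_shuffles α β w hw)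

lemma shuffleSum_splitSum (F : List Ω → List Ω → A) (α β : List Ω) :
    shuffleSum (splitSum F) α β =
      splitSum (fun α₁ α₂ => splitSum (fun β₁ β₂ =>
        shuffleSum (fun u => shuffleSum (F u) α₂ β₂) α₁ β₁) β) α := by
  induction α, β using shuffles.induct generalizing F with
  | case1 β => simp
  | case2 a α => simp
  | case3 a α b β ih₁ ih₂ =>
    rw [shuffleSum_cons_cons]
    simp only [splitSum_cons, shuffleSum_add, ih₁, ih₂, splitSum_add, shuffleSum_cons_cons,
      shuffleSum_nil_left, shuffleSum_nil_right]
    abel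

end AddCommMonoid

lemma shuffleSum_mul_left [NonUnitalNonAssocSemiring A] (a : A) (M : List Ω → A)
    (α β : List Ω) : shuffleSum (fun w => a * M w) α β = a * shuffleSum M α β :=
  List.sum_map_mul_left ..

lemma shuffleSum_mul_right [NonUnitalNonAssocSemiring A] (a : A) (M : List Ω → A)
    (α β : List Ω) : shuffleSum (fun w => M w * a) α β = shuffleSum M α β * a :=
  List.sum_map_mul_right ..

end ShuffleSum

/-! ### The algebra of dimoulds -/

lemma dimul_assoc [NonUnitalSemiring A] (P Q R : List Ω → List Ω → A) :
    dimul (dimul P Q) R = dimul P (dimul Q R) := by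
  funext α β
  simp only [dimul, ← splitSum_mul_left, ← splitSum_mul_right, mul_assoc]
  have hswap (u v : List Ω) := splitSum_comm (fun x y p q =>
    splitSum (fun r s => P p r * (Q q s * R v y)) x) β u
  have hβ (p q v : List Ω) := splitSum_assoc (fun r s y => P p r * (Q q s * R v y)) β
  simp only [hswap, hβ]
  rw [splitSum_assoc (fun p q v =>
    splitSum (fun r t => splitSum (fun s y => P p r * (Q q s * R v y)) t) β) α]
  exact congrArg (splitSum · α) (funext₂ fun p v => splitSum_comm _ v β)

section Mould

variable [CommRing A]

lemma mmul_eq_splitSum (M N : List Ω → A) :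
    mmul M N = splitSum fun u v => M u * N v :=
  funext fun w => (splitSum_eq_sum_range (fun u v => M u * N v) w).symm

lemma dimul_tensor (M M' N N' : List Ω → A) :
    dimul (fun α β => M α * M' β) (fun α β => N α * N' β) =
      fun α β => mmul M N α * mmul M' N' β := by
  funext α β
  have h (a b c d : List Ω) : M a * M' b * (N c * N' d) = M a * N c * (M' b * N' d) :=
    mul_mul_mul_comm ..
  simp only [dimul, mmul_eq_splitSum, h, splitSum_mul_right, splitSum_mul_left]

lemma dimul_add_left (P P' Q : List Ω → List Ω → A) :
    dimul (fun α β => P α β + P' α β) Q = fun α β => dimul P Q α β + dimul P' Q α β := by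
  funext α β
  simp only [dimul, add_mul, splitSum_add]

lemma dimul_add_right (P Q Q' : List Ω → List Ω → A) :
    dimul P (fun α β => Q α β + Q' α β) = fun α β => dimul P Q α β + dimul P Q' α β := by
  funext α β
  simp only [dimul, mul_add, splitSum_add]

@[simp] lemma munit_nil : munit ([] : List Ω) = (1 : A) := rfl

@[simp] lemma munit_cons (c : Ω) (w : List Ω) : (munit (c :: w) : A) = 0 := rfl

lemma splitSum_munit_left (F : List Ω → List Ω → A) (w : List Ω) :
    splitSum (fun u v => munit u * F u v) w = F [] w := by
  cases w <;> simp [splitSum_zero]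

lemma splitSum_munit_right (F : List Ω → List Ω → A) (w : List Ω) :
    splitSum (fun u v => F u v * munit v) w = F w [] := by
  induction w generalizing F with
  | nil => simp
  | cons c w ih => simp [ih fun u v => F (c :: u) v]

lemma shuffleSum_munit (α β : List Ω) :
    shuffleSum (munit : List Ω → A) α β = munit α * munit β := by
  cases α <;> cases β <;> simp [shuffleSum_cons_cons]
  simp [shuffleSum]

lemma shuffleSum_mmul (M N : List Ω → A) :
    shuffleSum (mmul M N) = dimul (shuffleSum M) (shuffleSum N) := by
  funext α β
  simp only [mmul_eq_splitSum, shuffleSum_splitSum, dimul, shuffleSum_mul_left,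
    shuffleSum_mul_right]

lemma munit_tensor_dimul (P : List Ω → List Ω → A) :
    dimul (fun α β => munit α * munit β) P = P := by
  funext α β
  simp only [dimul, mul_assoc, splitSum_munit_left, splitSum_mul_left]

lemma dimul_munit_tensor (P : List Ω → List Ω → A) :
    dimul P (fun α β => munit α * munit β) = P := by
  funext α β
  simp only [dimul, ← mul_assoc, splitSum_munit_right]

/-! ### Symmetral and alternal moulds -/

lemma isSymmetral_iff {M : List Ω → A} :
    IsSymmetral M ↔ M [] = 1 ∧ shuffleSum M = fun α β => M α * M β := by
  simp only [IsSymmetral, shSum_eq_shuffleSum]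
  refine and_congr_right fun h₁ => ⟨fun h => ?_, fun h α β _ _ => by rw [h]⟩
  funext α β
  rcases α with _ | ⟨a, α⟩
  · simp [h₁]
  rcases β with _ | ⟨b, β⟩
  · simp [h₁]
  · exact h _ _ (by simp) (by simp)

lemma isAlternal_iff {M : List Ω → A} :
    IsAlternal M ↔ shuffleSum M = fun α β => M α * munit β + munit α * M β := by
  simp only [IsAlternal, shSum_eq_shuffleSum]
  constructor
  · rintro ⟨h₀, h⟩
    funext α β
    rcases α with _ | ⟨a, α⟩
    · simp [h₀]
    rcases β with _ | ⟨b, β⟩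
    · simp [h₀]
    · simpa using h (a :: α) (b :: β) (by simp) (by simp)
  · intro h
    refine ⟨by simpa using congrFun₂ h [] [], fun α β hα hβ => ?_⟩
    obtain ⟨a, α, rfl⟩ := List.exists_cons_of_ne_nil hα
    obtain ⟨b, β, rfl⟩ := List.exists_cons_of_ne_nil hβ
    simp [h]

/-- The inverse of a symmetral mould satisfies the symmetrality relations. -/
lemma shuffleSum_inverse {M N : List Ω → A} (hM : IsSymmetral M)
    (hMN : mmul M N = munit) (hNM : mmul N M = munit) :
    shuffleSum N = fun α β => N α * N β := by
  have hM' := (isSymmetral_iff.1 hM).2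
  calc shuffleSum N
      = dimul (shuffleSum N)
          (dimul (fun α β => M α * M β) (fun α β => N α * N β)) := by
        rw [dimul_tensor, hMN, dimul_munit_tensor]
    _ = dimul (shuffleSum (mmul N M)) (fun α β => N α * N β) := by
        rw [← dimul_assoc, shuffleSum_mmul, hM']
    _ = fun α β => N α * N β := by
        rw [hNM, funext₂ shuffleSum_munit, munit_tensor_dimul]

/-- Logarithmic derivatives of a symmetral mould are alternal: if `D` satisfies the Leibniz
relation with respect to shuffles of `M`, both quotients of `D` by `M` are alternal. -/
lemma isAlternal_mmul_inverse {M N D : List Ω → A} (hM : IsSymmetral M)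
    (hMN : mmul M N = munit) (hNM : mmul N M = munit)
    (hD : shuffleSum D = fun α β => D α * M β + M α * D β) :
    IsAlternal (mmul D N) ∧ IsAlternal (mmul N D) := by
  have hN := shuffleSum_inverse hM hMN hNM
  constructor
  · rw [isAlternal_iff, shuffleSum_mmul, hD, hN, dimul_add_left, dimul_tensor, dimul_tensor,
      hMN]
  · rw [isAlternal_iff, shuffleSum_mmul, hD, hN, dimul_add_right, dimul_tensor, dimul_tensor,
      hNM]

lemma shuffleSum_derivation [Algebra ℂ A] (d : Derivation ℂ A A) {M : List Ω → A}
    (hM : IsSymmetral M) :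
    shuffleSum (fun w => d (M w)) = fun α β => d (M α) * M β + M α * d (M β) := by
  funext α β
  have h : shuffleSum (fun w => d (M w)) α β = d (shuffleSum M α β) := by
    simp [shuffleSum, map_list_sum, Function.comp_def]
  rw [h, (isSymmetral_iff.1 hM).2, d.leibniz, smul_eq_mul, smul_eq_mul]
  ring

lemma shuffleSum_Dphi (φ : Ω → A) {M : List Ω → A} (hM : IsSymmetral M) :
    shuffleSum (Dphi φ M) = fun α β => Dphi φ M α * M β + M α * Dphi φ M β := by
  funext α β
  have h : shuffleSum (Dphi φ M) α β =
      shuffleSum (fun w => ((α ++ β).map φ).sum * M w) α β :=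
    shuffleSum_congr fun w hw => by rw [Dphi, (hw.map φ).sum_eq]
  rw [h, shuffleSum_mul_left, (isSymmetral_iff.1 hM).2, List.map_append, List.sum_append]
  simp only [Dphi]
  ring

/-! ### The derivation `nablaJ` -/

section Nabla

variable [AddCommSemigroup Ω] [Nonempty Ω]

lemma wsum_perm {u v : List Ω} (h : u.Perm v) : wsum u = wsum v := by
  induction h with
  | nil => rfl
  | cons a h _ =>
    have : RightCommutative (fun x y : Ω => x + y) := ⟨add_right_comm⟩
    exact h.foldl_eq a
  | swap a b l => simp [wsum, add_comm]
  | trans _ _ ih₁ ih₂ => exact ih₁.trans ih₂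

/-- The part of `nablaJ` in which the contracted factor is a prefix of the word. -/
noncomputable def leadingNabla (J M : List Ω → A) : List Ω → A :=
  splitSum fun v t => J v * M (wsum v :: t)

lemma nablaJ_eq_splitSum {J : List Ω → A} (hJ : J [] = 0) (M : List Ω → A) (w : List Ω) :
    nablaJ J M w = splitSum (fun u s => leadingNabla J (fun t => M (u ++ t)) s) w := by
  simp only [leadingNabla, splitSum_eq_sum_range, nablaJ]
  refine Finset.sum_congr rfl fun i hi => ?_
  rw [Finset.sum_range_succ', Finset.sum_Ico_eq_sum_range]
  simp [hJ, List.drop_drop, add_assoc, add_comm 1]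

lemma nablaJ_nil (J M : List Ω → A) : nablaJ J M [] = 0 := by simp [nablaJ]

lemma nablaJ_cons {J : List Ω → A} (hJ : J [] = 0) (M : List Ω → A) (c : Ω) (w : List Ω) :
    nablaJ J M (c :: w) =
      leadingNabla J M (c :: w) + nablaJ J (fun u => M (c :: u)) w := by
  rw [nablaJ_eq_splitSum hJ, nablaJ_eq_splitSum hJ]
  rfl

lemma nablaJ_add (J M M' : List Ω → A) (w : List Ω) :
    nablaJ J (fun u => M u + M' u) w = nablaJ J M w + nablaJ J M' w := by
  simp only [nablaJ, mul_add, Finset.sum_add_distrib]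

lemma nablaJ_mul_left (J M : List Ω → A) (a : A) (w : List Ω) :
    nablaJ J (fun u => a * M u) w = a * nablaJ J M w := by
  simp only [nablaJ, mul_left_comm _ a, Finset.mul_sum]

lemma shuffleSum_leadingNabla {J : List Ω → A} (hJ : IsAlternal J) (M : List Ω → A)
    (α β : List Ω) :
    shuffleSum (leadingNabla J M) α β =
      splitSum (fun v t => J v * shuffleSum (fun w => M (wsum v :: w)) t β) α +
        splitSum (fun v t => J v * shuffleSum (fun w => M (wsum v :: w)) α t) β := by
  have h (α₁ α₂ β₁ β₂ : List Ω) :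
      shuffleSum (fun u => J u * shuffleSum (fun w => M (wsum u :: w)) α₂ β₂) α₁ β₁ =
        munit β₁ * (J α₁ * shuffleSum (fun w => M (wsum (α₁ ++ β₁) :: w)) α₂ β₂) +
          munit α₁ * (J β₁ * shuffleSum (fun w => M (wsum (α₁ ++ β₁) :: w)) α₂ β₂) := by
    rw [shuffleSum_congr (N := fun u =>
        J u * shuffleSum (fun w => M (wsum (α₁ ++ β₁) :: w)) α₂ β₂)
        fun u hu => by rw [wsum_perm hu],
      shuffleSum_mul_right, isAlternal_iff.1 hJ]
    ring
  simp only [leadingNabla, shuffleSum_splitSum, shuffleSum_mul_left, h, splitSum_add,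
    splitSum_munit_left, splitSum_mul_left, List.append_nil, List.nil_append]

lemma shuffleSum_nablaJ {J : List Ω → A} (hJ : IsAlternal J) (M : List Ω → A)
    (α β : List Ω) :
    shuffleSum (nablaJ J M) α β =
      nablaJ J (fun w => shuffleSum M w β) α + nablaJ J (fun w => shuffleSum M α w) β := by
  induction α, β using shuffles.induct generalizing M with
  | case1 β => simp [nablaJ_nil]
  | case2 a α => simp [nablaJ_nil]
  | case3 a α b β ih₁ ih₂ =>
    have hp := shuffleSum_leadingNabla hJ M (a :: α) (b :: β)
    have hl : leadingNabla J (fun w => shuffleSum M w (b :: β)) (a :: α) =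
        splitSum (fun v t => J v * shuffleSum (fun w => M (wsum v :: w)) t (b :: β))
            (a :: α) +
          leadingNabla J (fun w => shuffleSum (fun u => M (b :: u)) w β) (a :: α) := by
      simp only [leadingNabla, shuffleSum_cons_cons, mul_add, splitSum_add]
    have hr : leadingNabla J (fun w => shuffleSum M (a :: α) w) (b :: β) =
        leadingNabla J (fun w => shuffleSum (fun u => M (a :: u)) α w) (b :: β) +
          splitSum (fun v t => J v * shuffleSum (fun w => M (wsum v :: w)) (a :: α) t)
            (b :: β) := by
      simp only [leadingNabla, shuffleSum_cons_cons, mul_add, splitSum_add]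
    rw [shuffleSum_cons_cons] at hp ⊢
    simp only [nablaJ_cons hJ.1, shuffleSum_add, ih₁, ih₂, hl, hr]
    simp only [shuffleSum_cons_cons, nablaJ_add]
    linear_combination hp

lemma shuffleSum_nablaJ_of_isSymmetral {J M : List Ω → A} (hJ : IsAlternal J)
    (hM : IsSymmetral M) :
    shuffleSum (nablaJ J M) = fun α β => nablaJ J M α * M β + M α * nablaJ J M β := by
  funext α β
  simp only [shuffleSum_nablaJ hJ, (isSymmetral_iff.1 hM).2, nablaJ_mul_left]
  simp only [mul_comm _ (M β), nablaJ_mul_left]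

end Nabla

end Mould

end ShuffleSums

theorem stmt_12 {Ω A : Type*} [AddCommSemigroup Ω] [Nonempty Ω] [CommRing A] [Algebra ℂ A]
    (M N : List Ω → A) (hM : IsSymmetral M)
    (hMN : mmul M N = munit) (hNM : mmul N M = munit) :
    -- (i) D induced by a ℂ-linear derivation d of A
    (∀ d : Derivation ℂ A A,
      IsAlternal (mmul (fun ω => d (M ω)) N) ∧ IsAlternal (mmul N (fun ω => d (M ω)))) ∧
    -- (ii) D = D_φ for a function φ : Ω → A
    (∀ φ : Ω → A,
      IsAlternal (mmul (Dphi φ M) N) ∧ IsAlternal (mmul N (Dphi φ M))) ∧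
    -- (iii) D = ∇_J with J an alternal mould
    (∀ J : List Ω → A, IsAlternal J →
      IsAlternal (mmul (nablaJ J M) N) ∧ IsAlternal (mmul N (nablaJ J M))) := by
  exact ⟨fun d => isAlternal_mmul_inverse hM hMN hNM (shuffleSum_derivation d hM),
    fun φ => isAlternal_mmul_inverse hM hMN hNM (shuffleSum_Dphi φ hM),
    fun J hJ => isAlternal_mmul_inverse hM hMN hNM (shuffleSum_nablaJ_of_isSymmetral hJ hM)⟩
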